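/- Let V be an n×n orthogonal real matrix with columns v₁, …, vₙ, let Σ = diag(σ₁, …, σₙ) with all σᵢ > 0, and let A = V Σ Vᵗ. Fix γ > 0, a constant stepsize α ∈ ℝ, and b ∈ ℝⁿ, and let (x^{[k]}) be generated by x^{[0]} = 0 and (I + γ AᵗA) x^{[k+1]} = (I − α A) x^{[k]} + α b + γ Aᵗ b. Then for every k ≥ 1 the k-th iterate has the filtered singular-value expansion x^{[k]} = Σ_{i=1}^{n} φᵢ^{[k]} · ((vᵢᵗ b)/σᵢ) · vᵢ, where the filter factors are φᵢ^{[k]} = ((α σᵢ + γ σᵢ²)/(1 + γ σᵢ²)) · Σ_{ℓ=0}^{k−1} ((1 − α σᵢ)/(1 + γ σᵢ²))^ℓ. -/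

import Mathlib

open Matrix

/-!
On a common left and right eigenvector `v` of `A`, with eigenvalue `s`, the matrix recursion becomes
the scalar recursion `(1 + γ s²) yₖ₊₁ = (1 - α s) yₖ + (α + γ s) (v ⬝ᵥ b)` for `yₖ = v ⬝ᵥ xₖ`, which
is affine and therefore solved by a geometric sum. If the columns of an orthogonal matrix are such
eigenvectors, expanding `xₖ` in them gives the result.
-/

theorem eq_geom_sum_mul_of_affine_recurrence {R : Type*} [Semiring R] {r c : R} {y : ℕ → R}
    (hy0 : y 0 = 0) (hrec : ∀ k, y (k + 1) = r * y k + c) (k : ℕ) :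
    y k = (∑ ℓ ∈ Finset.range k, r ^ ℓ) * c := by
  induction k with
  | zero => simp [hy0]
  | succ k ih => rw [hrec, ih, geom_sum_succ, add_mul, one_mul, mul_assoc]

section Diagonalization

variable {R m ι : Type*} [CommSemiring R] [Fintype m] [Fintype ι] [DecidableEq ι]

theorem mulVec_col_of_diagonalization {P : Matrix m ι R} {Q : Matrix ι m R} (hQP : Q * P = 1)
    (σ : ι → R) (i : ι) : (P * diagonal σ * Q) *ᵥ Pᵀ i = σ i • Pᵀ i := by
  have hcols : P * diagonal σ * Q * P = P * diagonal σ := by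
    rw [Matrix.mul_assoc, hQP, Matrix.mul_one]
  funext j
  calc ((P * diagonal σ * Q) *ᵥ Pᵀ i) j = (P * diagonal σ * Q * P) j i := rfl
    _ = (σ i • Pᵀ i) j := by rw [hcols, mul_diagonal, mul_comm]; rfl

theorem row_vecMul_of_diagonalization {P : Matrix m ι R} {Q : Matrix ι m R} (hQP : Q * P = 1)
    (σ : ι → R) (i : ι) : Q i ᵥ* (P * diagonal σ * Q) = σ i • Q i := by
  have hrows : Q * (P * diagonal σ * Q) = diagonal σ * Q := by
    rw [Matrix.mul_assoc, ← Matrix.mul_assoc, hQP, Matrix.one_mul]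
  funext j
  calc (Q i ᵥ* (P * diagonal σ * Q)) j = (Q * (P * diagonal σ * Q)) i j := rfl
    _ = (σ i • Q i) j := by rw [hrows, diagonal_mul]; rfl

end Diagonalization

theorem sum_dotProduct_smul_col {R m ι : Type*} [CommSemiring R] [Fintype m] [DecidableEq m]
    [Fintype ι] {V : Matrix m ι R} (hV : V * Vᵀ = 1) (w : m → R) :
    ∑ i, (Vᵀ i ⬝ᵥ w) • Vᵀ i = w :=
  calc ∑ i, (Vᵀ i ⬝ᵥ w) • Vᵀ i = V *ᵥ (Vᵀ *ᵥ w) := by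
        rw [mulVec_eq_sum]
        exact Finset.sum_congr rfl fun _ _ ↦ (op_smul_eq_smul _ _).symm
    _ = w := by rw [mulVec_mulVec, hV, one_mulVec]

theorem dotProduct_transpose_mulVec_of_mulVec_eq_smul {R ι : Type*} [CommSemiring R] [Fintype ι]
    {A : Matrix ι ι R} {v : ι → R} {s : R} (hright : A *ᵥ v = s • v) (w : ι → R) :
    v ⬝ᵥ Aᵀ *ᵥ w = s * (v ⬝ᵥ w) := by
  rw [dotProduct_mulVec, vecMul_transpose, hright, smul_dotProduct, smul_eq_mul]

theorem dotProduct_mulVec_of_vecMul_eq_smul {R ι : Type*} [CommSemiring R] [Fintype ι]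
    {A : Matrix ι ι R} {v : ι → R} {s : R} (hleft : v ᵥ* A = s • v) (w : ι → R) :
    v ⬝ᵥ A *ᵥ w = s * (v ⬝ᵥ w) := by
  rw [dotProduct_mulVec, hleft, smul_dotProduct, smul_eq_mul]

theorem dotProduct_stabilized_step {R ι : Type*} [CommRing R] [Fintype ι] [DecidableEq ι]
    {A : Matrix ι ι R} {v : ι → R} {s : R} (hleft : v ᵥ* A = s • v) (hright : A *ᵥ v = s • v)
    {γ α : R} {b x x' : ι → R}
    (hstep : (1 + γ • (Aᵀ * A)) *ᵥ x' = (1 - α • A) *ᵥ x + α • b + γ • Aᵀ *ᵥ b) :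
    (1 + γ * s ^ 2) * (v ⬝ᵥ x') = (1 - α * s) * (v ⬝ᵥ x) + (α + γ * s) * (v ⬝ᵥ b) := by
  have h := congrArg (v ⬝ᵥ ·) hstep
  simp only [add_mulVec, sub_mulVec, one_mulVec, smul_mulVec, ← mulVec_mulVec, dotProduct_add,
    dotProduct_sub, dotProduct_smul, smul_eq_mul, dotProduct_mulVec_of_vecMul_eq_smul hleft,
    dotProduct_transpose_mulVec_of_mulVec_eq_smul hright] at h
  linear_combination h

/-- The spectral filter `qₖ` of the stabilized gradient method, for which `xₖ = qₖ(A) b` when `A` is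
symmetric. The filter factor for the singular value `s` is `φ = s qₖ(s)`; working with `qₖ` instead
avoids the quotient `φ / s` at `s = 0`. -/
def stabilizedFilter {K : Type*} [Field K] (α γ : K) (k : ℕ) (s : K) : K :=
  (α + γ * s) / (1 + γ * s ^ 2) *
    ∑ ℓ ∈ Finset.range k, ((1 - α * s) / (1 + γ * s ^ 2)) ^ ℓ

section StabilizedGradient

variable {K ι : Type*} [Field K] [Fintype ι] [DecidableEq ι]

theorem filterFactor_mul_div_eq_stabilizedFilter_mul {s : K} (hs : s ≠ 0) (α γ c : K) (k : ℕ) :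
    (α * s + γ * s ^ 2) / (1 + γ * s ^ 2) *
        (∑ ℓ ∈ Finset.range k, ((1 - α * s) / (1 + γ * s ^ 2)) ^ ℓ) * (c / s) =
      stabilizedFilter α γ k s * c := by
  rw [stabilizedFilter, show α * s + γ * s ^ 2 = (α + γ * s) * s by ring]
  field_simp

theorem dotProduct_stabilized_iterate {A : Matrix ι ι K} {v : ι → K} {s : K}
    (hleft : v ᵥ* A = s • v) (hright : A *ᵥ v = s • v) {γ α : K} (hs : 1 + γ * s ^ 2 ≠ 0)
    {b : ι → K} {x : ℕ → ι → K} (hx0 : x 0 = 0)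
    (hrec : ∀ k, (1 + γ • (Aᵀ * A)) *ᵥ x (k + 1) =
      (1 - α • A) *ᵥ x k + α • b + γ • Aᵀ *ᵥ b) (k : ℕ) :
    v ⬝ᵥ x k = stabilizedFilter α γ k s * (v ⬝ᵥ b) := by
  have haffine (k : ℕ) : v ⬝ᵥ x (k + 1) = (1 - α * s) / (1 + γ * s ^ 2) * (v ⬝ᵥ x k) +
      (α + γ * s) / (1 + γ * s ^ 2) * (v ⬝ᵥ b) := by
    rw [div_mul_eq_mul_div, div_mul_eq_mul_div, ← add_div, eq_div_iff hs, mul_comm]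
    exact dotProduct_stabilized_step hleft hright (hrec k)
  have hzero : v ⬝ᵥ x 0 = 0 := by rw [hx0, dotProduct_zero]
  rw [eq_geom_sum_mul_of_affine_recurrence (y := fun k ↦ v ⬝ᵥ x k) hzero haffine k,
    stabilizedFilter]
  ring

theorem stmt12_general {A V : Matrix ι ι K} {σ : ι → K} (hV : V * Vᵀ = 1)
    (hA : A = V * diagonal σ * Vᵀ) {γ α : K} (hγσ : ∀ i, 1 + γ * σ i ^ 2 ≠ 0)
    {b : ι → K} {x : ℕ → ι → K} (hx0 : x 0 = 0)
    (hrec : ∀ k, (1 + γ • (Aᵀ * A)) *ᵥ x (k + 1) =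
      (1 - α • A) *ᵥ x k + α • b + γ • Aᵀ *ᵥ b) (k : ℕ) :
    x k = ∑ i, (stabilizedFilter α γ k (σ i) * (Vᵀ i ⬝ᵥ b)) • Vᵀ i := by
  have hV' : Vᵀ * V = 1 := mul_eq_one_comm.mp hV
  have hleft (i : ι) : Vᵀ i ᵥ* A = σ i • Vᵀ i := hA ▸ row_vecMul_of_diagonalization hV' σ i
  have hright (i : ι) : A *ᵥ Vᵀ i = σ i • Vᵀ i := hA ▸ mulVec_col_of_diagonalization hV' σ i
  calc x k = ∑ i, (Vᵀ i ⬝ᵥ x k) • Vᵀ i := (sum_dotProduct_smul_col hV (x k)).symm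
    _ = ∑ i, (stabilizedFilter α γ k (σ i) * (Vᵀ i ⬝ᵥ b)) • Vᵀ i := by
      simp only [fun i ↦ dotProduct_stabilized_iterate (hleft i) (hright i) (hγσ i) hx0 hrec k]

end StabilizedGradient

/-- Filtered singular-value expansion of the stabilized gradient
iterates: if `V` is orthogonal with columns `vᵢ`, `A = V (diagonal σ) Vᵀ` with all
`σ i > 0`, and `(x^k)` is the stabilized sequence from `x⁰ = 0` with constant stepsize
`α` and parameter `γ > 0`, then for all `k ≥ 1`,
`x^k = Σᵢ φᵢ^{[k]} ((vᵢᵗb)/σᵢ) vᵢ` with filter factors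
`φᵢ^{[k]} = ((ασᵢ + γσᵢ²)/(1 + γσᵢ²)) Σ_{ℓ<k} ((1 − ασᵢ)/(1 + γσᵢ²))^ℓ`. -/
theorem stmt12 (n : ℕ) (A V : Matrix (Fin n) (Fin n) ℝ) (σ : Fin n → ℝ)
    (hV : V * Vᵀ = 1 ∧ Vᵀ * V = 1) (hσ : ∀ i, 0 < σ i)
    (hA : A = V * Matrix.diagonal σ * Vᵀ)
    (γ : ℝ) (hγ : 0 < γ) (α : ℝ) (b : Fin n → ℝ)
    (x : ℕ → (Fin n → ℝ)) (hx0 : x 0 = 0)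
    (hrec : ∀ k, (1 + γ • (Aᵀ * A)).mulVec (x (k + 1)) =
      (1 - α • A).mulVec (x k) + α • b + γ • Aᵀ.mulVec b) :
    ∀ k : ℕ, 1 ≤ k →
      x k = ∑ i : Fin n,
        ((((α * σ i + γ * σ i ^ 2) / (1 + γ * σ i ^ 2)) *
            ∑ ℓ ∈ Finset.range k, ((1 - α * σ i) / (1 + γ * σ i ^ 2)) ^ ℓ) *
          ((Vᵀ i ⬝ᵥ b) / σ i)) • Vᵀ i := by
  intro k _
  simp only [filterFactor_mul_div_eq_stabilizedFilter_mul (hσ _).ne']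
  exact stmt12_general hV.1 hA (fun i ↦ by positivity) hx0 hrec k
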